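/- Let p be a prime with p ≡ 1 (mod 3), write p = A² + 3B² with integers A, B and A ≡ 1 (mod 3), and let a be an integer with p ∤ a. If a^((p−1)/3) ≡ 1 (mod p), then V_p(x² + 2a/x) = (2p − 1 + 2A)/3; if a^((p−1)/3) ≡ (−1 − A·B⁻¹)/2 (mod p), then V_p(x² + 2a/x) = (2p − 1 − A + 3B)/3; and if a^((p−1)/3) ≡ (−1 + A·B⁻¹)/2 (mod p), then V_p(x² + 2a/x) = (2p − 1 − A − 3B)/3. -/

import Mathlib

/-!
Two distinct roots `x, y` of `X ^ 3 - b X + c` satisfy `x y (x + y) = c`, so the number of values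
of `x ^ 2 + c / x` is governed by the number of points of this cubic curve, that is, by its trace
of Frobenius `t c`, a sum of two conjugate Jacobi sums twisted by the cubic character of `c`. The
norm of the Jacobi sums gives `t c ^ 2 + t c * t (c g) + t (c g) ^ 2 = 3 q` for `g` not a cube.
Together with congruences of `t 2` modulo `2` and `3` and the uniqueness of `p = A ^ 2 + 3 B ^ 2`,
this forces `t 2 = 2 A` and `t (2 a) = -A ± 3 B` for `a` not a cube. Taken with values in the
field itself, the cubic character has a vanishing Jacobi sum, hence
`t (2 a) ≡ a ^ ((p - 1) / 3) * t 2` modulo `p`, which decides the sign.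
-/

open Finset

lemma inv_eq_sq_of_orderOf_eq_three {G : Type*} [Group G] {g : G} (hg : orderOf g = 3) :
    g⁻¹ = g ^ 2 := by
  rw [inv_eq_iff_mul_eq_one, ← pow_succ', ← pow_orderOf_eq_one g, hg]

section CharacterSums

variable {F R : Type*} [Field F]

lemma mulChar_apply_eq_one_iff_exists_pow_orderOf_eq [Finite F] [CommRing R] (χ : MulChar F R)
    {d : F} (hd : d ≠ 0) : χ d = 1 ↔ ∃ e, e ^ orderOf χ = d := by
  constructor
  · intro h
    obtain ⟨g, hg⟩ := IsCyclic.exists_generator (α := Fˣ)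
    obtain ⟨k, hk : g ^ k = Units.mk0 d hd⟩ := mem_powers_iff_mem_zpowers.mpr (hg (Units.mk0 d hd))
    have hgk : (g : F) ^ k = d := by simpa using congrArg Units.val hk
    have hχk : χ ^ k = 1 := by
      rw [MulChar.eq_iff hg, MulChar.pow_apply_coe, ← map_pow, hgk, h, MulChar.one_apply_coe]
    obtain ⟨j, rfl⟩ := orderOf_dvd_of_pow_eq_one hχk
    exact ⟨(g : F) ^ j, by rw [← pow_mul, mul_comm, hgk]⟩
  · rintro ⟨e, rfl⟩
    have he : IsUnit e := (ne_zero_pow χ.orderOf_pos.ne' hd).isUnit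
    rw [map_pow, ← MulChar.pow_apply' χ χ.orderOf_pos.ne', pow_orderOf_eq_one,
      MulChar.one_apply he]

lemma sum_range_orderOf_mulChar_apply_pow_eq_zero [Finite F] [CommRing R] [IsDomain R]
    (χ : MulChar F R) {d : F} (hd : d ≠ 0) (h : χ d ≠ 1) :
    ∑ i ∈ range (orderOf χ), χ d ^ i = 0 := by
  have hpow : χ d ^ orderOf χ = 1 := by
    rw [← map_pow, mulChar_apply_eq_one_iff_exists_pow_orderOf_eq χ (pow_ne_zero _ hd)]
    exact ⟨d, rfl⟩
  have hgeom : (χ d - 1) * ∑ i ∈ range (orderOf χ), χ d ^ i = 0 := by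
    rw [mul_geom_sum, hpow, sub_self]
  exact (mul_eq_zero.mp hgeom).resolve_left (sub_ne_zero.mpr h)

variable [Fintype F]

lemma exists_isPrimitiveRoot_of_dvd_card_sub_one {n : ℕ} (hn : n ∣ Fintype.card F - 1) :
    ∃ ζ : F, IsPrimitiveRoot ζ n := by
  classical
  obtain ⟨g, hg⟩ := IsCyclic.exists_generator (α := Fˣ)
  obtain ⟨k, hk⟩ := hn
  have hord : orderOf g = k * n := by
    rw [orderOf_eq_card_of_forall_mem_zpowers hg, Nat.card_eq_fintype_card, Fintype.card_units,
      hk, mul_comm]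
  exact ⟨_, ((IsPrimitiveRoot.orderOf g).pow (orderOf_pos g) hord).map_of_injective
    (f := Units.coeHom F) Units.val_injective⟩

variable [DecidableEq F] [CommRing R] [IsDomain R]

lemma card_filter_pow_eq_pow {n : ℕ} (hn : n ∣ Fintype.card F - 1) {e : F} (he : e ≠ 0) :
    #{x : F | x ^ n = e ^ n} = n := by
  obtain ⟨ζ, hζ⟩ := exists_isPrimitiveRoot_of_dvd_card_sub_one hn
  have hn0 : 0 < n := Nat.pos_of_dvd_of_pos hn (Nat.sub_pos_of_lt Fintype.one_lt_card)
  have hroots : ({x | x ^ n = e ^ n} : Finset F) = (Polynomial.nthRoots n (e ^ n)).toFinset := by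
    ext x
    simp [Polynomial.mem_nthRoots hn0]
  rw [hroots, Multiset.toFinset_card_of_nodup (hζ.nthRoots_nodup (pow_ne_zero n he)),
    hζ.card_nthRoots, if_pos ⟨e, rfl⟩]

lemma card_filter_pow_orderOf_eq (χ : MulChar F R) {d : F} (hd : d ≠ 0) :
    (#{x : F | x ^ orderOf χ = d} : R) = ∑ i ∈ range (orderOf χ), χ d ^ i := by
  by_cases h : χ d = 1
  · obtain ⟨e, rfl⟩ := (mulChar_apply_eq_one_iff_exists_pow_orderOf_eq χ hd).mp h
    rw [card_filter_pow_eq_pow χ.orderOf_dvd_card_sub_one (ne_zero_pow χ.orderOf_pos.ne' hd), h]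
    simp
  · have hempty : ({x : F | x ^ orderOf χ = d} : Finset F) = ∅ := filter_eq_empty_iff.mpr
      fun x _ hx ↦ h ((mulChar_apply_eq_one_iff_exists_pow_orderOf_eq χ hd).mpr ⟨x, hx⟩)
    rw [hempty, card_empty, Nat.cast_zero, sum_range_orderOf_mulChar_apply_pow_eq_zero χ hd h]

lemma card_filter_pow_three_mul_eq {χ : MulChar F R} (hχ : orderOf χ = 3) {c : F} (hc : c ≠ 0)
    (v : F) :
    (#{z : F | z ^ 3 * v = c} : R) = (1 : MulChar F R) v + χ c * χ⁻¹ v + χ⁻¹ c * χ v := by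
  rcases eq_or_ne v 0 with rfl | hv
  · simp [hc.symm, MulChar.map_zero]
  have hdiv : χ (c / v) = χ c * χ⁻¹ v := by
    rw [div_eq_mul_inv, map_mul, MulChar.inv_apply']
  have hdiv_sq : χ (c / v) ^ 2 = χ⁻¹ c * χ v := by
    rw [← MulChar.pow_apply' χ two_ne_zero, ← inv_eq_sq_of_orderOf_eq_three hχ, div_eq_mul_inv,
      map_mul, MulChar.inv_apply' χ v⁻¹, inv_inv]
  have hfilter : ({z | z ^ 3 * v = c} : Finset F) = ({z | z ^ orderOf χ = c / v} : Finset F) := by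
    simp only [hχ, eq_div_iff hv]
  rw [hfilter, card_filter_pow_orderOf_eq χ (div_ne_zero hc hv), hχ, MulChar.one_apply hv.isUnit,
    ← hdiv, ← hdiv_sq]
  simp [sum_range_succ]

end CharacterSums

section PowerResidueCharacter

variable {F : Type*} [Field F] [Fintype F]

/-- The `n`-th power residue character `x ↦ x ^ ((q - 1) / n)` of a field with `q` elements, with
values in the field itself; it is only meaningful for `n ∣ q - 1`. -/
noncomputable def powerResidueChar (F : Type*) [Field F] [Fintype F] (n : ℕ) : MulChar F F :=
  MulChar.ofUnitHom (powMonoidHom ((Fintype.card F - 1) / n))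

lemma powerResidueChar_apply (n : ℕ) {x : F} (hx : x ≠ 0) :
    powerResidueChar F n x = x ^ ((Fintype.card F - 1) / n) := by
  simpa [powerResidueChar] using
    MulChar.ofUnitHom_coe (powMonoidHom ((Fintype.card F - 1) / n)) (Units.mk0 x hx)

lemma orderOf_powerResidueChar {n : ℕ} (hn : n ∣ Fintype.card F - 1) :
    orderOf (powerResidueChar F n) = n := by
  classical
  obtain ⟨m, hm⟩ := hn
  have hpos : 0 < Fintype.card F - 1 := Nat.sub_pos_of_lt Fintype.one_lt_card
  have hn0 : 0 < n := Nat.pos_of_ne_zero (by rintro rfl; simp_all)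
  have hm0 : 0 < m := Nat.pos_of_ne_zero (by rintro rfl; simp_all)
  have hdiv : (Fintype.card F - 1) / n = m := by rw [hm, Nat.mul_div_cancel_left m hn0]
  have hexp : Monoid.exponent Fˣ = n * m := by
    rw [IsCyclic.exponent_eq_card, Nat.card_eq_fintype_card, Fintype.card_units, hm]
  refine Nat.dvd_right_iff_eq.mp fun k ↦ ?_
  rw [orderOf_dvd_iff_pow_eq_one, ← Nat.mul_dvd_mul_iff_right hm0, ← hexp,
    Monoid.exponent_dvd_iff_forall_pow_eq_one, MulChar.eq_one_iff]
  refine forall_congr' fun u ↦ ?_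
  rw [MulChar.pow_apply_coe, powerResidueChar_apply n u.ne_zero, hdiv, ← pow_mul, mul_comm,
    Units.ext_iff, Units.val_pow_eq_pow_val, Units.val_one]

lemma pow_card_sub_one_div_eq_one_iff {n : ℕ} (hn : n ∣ Fintype.card F - 1) {a : F} (ha : a ≠ 0) :
    a ^ ((Fintype.card F - 1) / n) = 1 ↔ ∃ e, e ^ n = a := by
  rw [← powerResidueChar_apply n ha, mulChar_apply_eq_one_iff_exists_pow_orderOf_eq _ ha,
    orderOf_powerResidueChar hn]

lemma exists_not_exists_pow_eq {n : ℕ} (hn : n ∣ Fintype.card F - 1) (hn1 : n ≠ 1) :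
    ∃ g : F, ¬∃ e, e ^ n = g := by
  have hχ : powerResidueChar F n ≠ 1 := by
    rwa [Ne, ← orderOf_eq_one_iff, orderOf_powerResidueChar hn]
  obtain ⟨u, hu⟩ := MulChar.ne_one_iff.mp hχ
  rw [powerResidueChar_apply n u.ne_zero, Ne, pow_card_sub_one_div_eq_one_iff hn u.ne_zero] at hu
  exact ⟨u, hu⟩

lemma sum_eval_eq_zero_of_natDegree_lt {f : Polynomial F}
    (hf : f.natDegree < Fintype.card F - 1) : ∑ x : F, f.eval x = 0 := by
  simp only [Polynomial.eval_eq_sum_range]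
  rw [sum_comm]
  refine sum_eq_zero fun i hi ↦ ?_
  rw [← mul_sum, FiniteField.sum_pow_lt_card_sub_one F i (by rw [mem_range] at hi; omega), mul_zero]

lemma jacobiSum_powerResidueChar_self {n : ℕ} (hn : n ∣ Fintype.card F - 1) (hn2 : 2 < n) :
    jacobiSum (powerResidueChar F n) (powerResidueChar F n) = 0 := by
  set m := (Fintype.card F - 1) / n
  have hmn : n * m = Fintype.card F - 1 := Nat.mul_div_cancel' hn
  have hpos : 0 < n * m := hmn ▸ Nat.sub_pos_of_lt Fintype.one_lt_card
  have hm0 : m ≠ 0 := (Nat.pos_of_mul_pos_left hpos).ne'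
  have hχ (x : F) : powerResidueChar F n x = x ^ m := by
    rcases eq_or_ne x 0 with rfl | hx
    · rw [MulChar.map_zero, zero_pow hm0]
    · exact powerResidueChar_apply n hx
  open Polynomial in
  have hdeg : (X ^ m * (1 - X) ^ m : F[X]).natDegree < Fintype.card F - 1 := by
    have : (X ^ m * (1 - X) ^ m : F[X]).natDegree ≤ m + m := by compute_degree!
    have : 2 * m < n * m := by gcongr
    omega
  simpa [jacobiSum, hχ] using sum_eval_eq_zero_of_natDegree_lt hdeg

end PowerResidueCharacter

section CubicRoots

variable {F : Type*} [Field F] [Fintype F] [DecidableEq F] {b c x y : F}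

/-- The roots of `X ^ 3 - b X + c`. For `c ≠ 0` they are the preimages of `b` under
`x ↦ x ^ 2 + c / x`. -/
def cubicRoots (b c : F) : Finset F := {x | x ^ 3 + c = b * x}

@[simp]
lemma mem_cubicRoots : x ∈ cubicRoots b c ↔ x ^ 3 + c = b * x := by simp [cubicRoots]

lemma ne_zero_of_mem_cubicRoots (hc : c ≠ 0) (hx : x ∈ cubicRoots b c) : x ≠ 0 := by
  rintro rfl
  simp_all

lemma mem_cubicRoots_iff_eq_or (hc : c ≠ 0) (hx : x ∈ cubicRoots b c) :
    y ∈ cubicRoots b c ↔ y = x ∨ x * y * (x + y) = c := by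
  have hx0 := ne_zero_of_mem_cubicRoots hc hx
  rw [mem_cubicRoots] at hx ⊢
  have key : x * (y ^ 3 + c - b * y) = (y - x) * (x * y * (x + y) - c) := by
    linear_combination y * hx
  rw [← sub_eq_zero, ← mul_right_inj' hx0, key, mul_zero, mul_eq_zero, sub_eq_zero, sub_eq_zero]

lemma cubicRoots_subset_of_mem_of_ne (hc : c ≠ 0) (hx : x ∈ cubicRoots b c)
    (hy : y ∈ cubicRoots b c) (hxy : y ≠ x) : cubicRoots b c ⊆ {x, y, -(x + y)} := by
  have hcurve := ((mem_cubicRoots_iff_eq_or hc hx).mp hy).resolve_left hxy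
  intro t ht
  simp only [mem_insert, mem_singleton]
  refine ((mem_cubicRoots_iff_eq_or hc hx).mp ht).imp_right fun htx ↦ ?_
  have key : x * ((t - y) * (t + (x + y))) = 0 := by linear_combination htx - hcurve
  simpa [ne_zero_of_mem_cubicRoots hc hx, sub_eq_zero, add_eq_zero_iff_eq_neg] using key

lemma card_cubicRoots_le_three (hc : c ≠ 0) : #(cubicRoots b c) ≤ 3 := by
  by_cases h : #(cubicRoots b c) ≤ 1
  · omega
  obtain ⟨x, hx, y, hy, hxy⟩ := one_lt_card.mp (not_le.mp h)
  exact (card_le_card (cubicRoots_subset_of_mem_of_ne hc hx hy hxy.symm)).trans card_le_three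

-- A common root of `X ^ 3 - b X + c` and its derivative satisfies `2 x ^ 3 = c`.
lemma cubicRoots_eq_of_two_mul_pow_three_eq (hc : c ≠ 0) (hx : x ∈ cubicRoots b c)
    (hdouble : 2 * x ^ 3 = c) : cubicRoots b c = {x, -(2 * x)} := by
  ext t
  have hx0 := ne_zero_of_mem_cubicRoots hc hx
  have key : x * t * (x + t) - c = x * ((t - x) * (t + 2 * x)) := by linear_combination hdouble
  rw [mem_cubicRoots_iff_eq_or hc hx, ← sub_eq_zero (a := x * t * (x + t)), key]
  simp [hx0, sub_eq_zero, add_eq_zero_iff_eq_neg]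

lemma card_filter_two_mul_pow_three_eq (h3 : (3 : F) ≠ 0) (hc : c ≠ 0) :
    #{x ∈ cubicRoots b c | 2 * x ^ 3 = c} = if #(cubicRoots b c) = 2 then 1 else 0 := by
  by_cases hdouble : ∃ x ∈ cubicRoots b c, 2 * x ^ 3 = c
  · obtain ⟨x, hx, hxc⟩ := hdouble
    have hx0 := ne_zero_of_mem_cubicRoots hc hx
    have hne : x ≠ -(2 * x) := fun h ↦ mul_ne_zero h3 hx0 (by linear_combination h)
    have hne' : 2 * (-(2 * x)) ^ 3 ≠ c := fun h ↦
      mul_ne_zero (mul_ne_zero h3 h3) hc (by linear_combination -8 * hxc - h)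
    rw [cubicRoots_eq_of_two_mul_pow_three_eq hc hx hxc, card_pair hne, if_pos rfl,
      filter_insert, if_pos hxc, filter_singleton, if_neg hne', insert_empty, card_singleton]
  · have hcard : #(cubicRoots b c) ≠ 2 := by
      intro h
      obtain ⟨x, y, hxy, hroots⟩ := card_eq_two.mp h
      have hx : x ∈ cubicRoots b c := by simp [hroots]
      have hy : y ∈ cubicRoots b c := by simp [hroots]
      have hcurve := ((mem_cubicRoots_iff_eq_or hc hx).mp hy).resolve_left hxy.symm
      have hz : -(x + y) ∈ cubicRoots b c :=
        (mem_cubicRoots_iff_eq_or hc hx).mpr (.inr (by linear_combination hcurve))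
      rw [hroots, mem_insert, mem_singleton] at hz
      rcases hz with hz | hz
      · exact hdouble ⟨x, hx, by rw [← hcurve]; linear_combination x * (y - x) * hz⟩
      · exact hdouble ⟨y, hy, by rw [← hcurve]; linear_combination y * (x - y) * hz⟩
    rw [if_neg hcard, card_eq_zero, filter_eq_empty_iff]
    exact fun x hx hxc ↦ hdouble ⟨x, hx, hxc⟩

lemma card_eq_sum_card_filter_mem_cubicRoots {ι : Type*} (s : Finset ι) (f : ι → F) (c : F)
    (hf : ∀ i ∈ s, f i ≠ 0) : #s = ∑ b, #{i ∈ s | f i ∈ cubicRoots b c} := by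
  rw [card_eq_sum_card_fiberwise (f := fun i ↦ (f i ^ 3 + c) / f i) (t := univ) (by simp)]
  refine sum_congr rfl fun b _ ↦ congrArg card (filter_congr fun i hi ↦ ?_)
  rw [mem_cubicRoots, div_eq_iff (hf i hi)]

end CubicRoots

section CubicCurve

variable {F : Type*} [Field F] [Fintype F] [DecidableEq F] {c : F}

/-- The affine points of the cubic curve `x y (x + y) = c`. For `c ≠ 0` they are the pairs `(x, y)`
for which `X ^ 3 - b X + c = (X - x) (X - y) (X + x + y)` for some `b`. -/
def cubicCurve (c : F) : Finset (F × F) := {q | q.1 * q.2 * (q.1 + q.2) = c}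

@[simp]
lemma mem_cubicCurve {q : F × F} : q ∈ cubicCurve c ↔ q.1 * q.2 * (q.1 + q.2) = c := by
  simp [cubicCurve]

lemma fst_ne_zero_of_mem_cubicCurve (hc : c ≠ 0) {q : F × F} (hq : q ∈ cubicCurve c) :
    q.1 ≠ 0 := by
  intro h
  simp_all

lemma filter_cubicCurve_eq_offDiag_union_diag (hc : c ≠ 0) (b : F) :
    {q ∈ cubicCurve c | q.1 ∈ cubicRoots b c} =
      (cubicRoots b c).offDiag ∪ {x ∈ cubicRoots b c | 2 * x ^ 3 = c}.diag := by
  ext ⟨x, y⟩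
  have hmem (hx : x ∈ cubicRoots b c) := mem_cubicRoots_iff_eq_or (y := y) hc hx
  have hdiag : x = y → (x * y * (x + y) = c ↔ 2 * x ^ 3 = c) := by
    rintro rfl
    ring_nf
  simp only [mem_filter, mem_cubicCurve, mem_union, mem_offDiag, mem_diag]
  tauto

lemma card_cubicCurve (hc : c ≠ 0) :
    #(cubicCurve c) = ∑ b : F,
      (#(cubicRoots b c).offDiag + #{x ∈ cubicRoots b c | 2 * x ^ 3 = c}) := by
  rw [card_eq_sum_card_filter_mem_cubicRoots _ Prod.fst c
    fun _ ↦ fst_ne_zero_of_mem_cubicCurve hc]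
  refine sum_congr rfl fun b _ ↦ ?_
  rw [filter_cubicCurve_eq_offDiag_union_diag hc, card_union_of_disjoint, diag_card]
  exact (disjoint_diag_offDiag _).symm.mono_right (diag_mono (filter_subset _ _))

lemma card_cubicCurve_modEq_two (hc : c ≠ 0) :
    #(cubicCurve c) ≡ #{x : F | 2 * x ^ 3 = c} [MOD 2] := by
  have hdouble : #{x : F | 2 * x ^ 3 = c} = ∑ b, #{x ∈ cubicRoots b c | 2 * x ^ 3 = c} := by
    rw [card_eq_sum_card_filter_mem_cubicRoots _ id c fun x hx hx0 ↦ hc (by simp_all)]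
    refine sum_congr rfl fun b _ ↦ congrArg card ?_
    ext x
    simp [and_comm]
  have heven : Even (∑ b, #(cubicRoots b c).offDiag) := by
    refine even_sum _ fun b _ ↦ ?_
    rw [offDiag_card, ← Nat.mul_sub_one]
    exact Nat.even_mul_pred_self _
  rw [card_cubicCurve hc, sum_add_distrib, hdouble]
  simpa only [zero_add] using (Nat.modEq_zero_iff_dvd.mpr heven.two_dvd).add_right
    (∑ b : F, #{x ∈ cubicRoots b c | 2 * x ^ 3 = c})

lemma card_offDiag_cubicRoots_add (h3 : (3 : F) ≠ 0) (hc : c ≠ 0) (b : F) :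
    #(cubicRoots b c).offDiag + #{x ∈ cubicRoots b c | 2 * x ^ 3 = c} +
      3 * (if (cubicRoots b c).Nonempty then 1 else 0) = 3 * #(cubicRoots b c) := by
  simp only [offDiag_card, card_filter_two_mul_pow_three_eq h3 hc, ← card_pos]
  have := card_cubicRoots_le_three (b := b) hc
  interval_cases #(cubicRoots b c) <;> rfl

lemma card_cubicCurve_add_three_mul (h3 : (3 : F) ≠ 0) (hc : c ≠ 0) :
    #(cubicCurve c) + 3 * #{b : F | (cubicRoots b c).Nonempty} = 3 * (Fintype.card F - 1) := by
  have hunits : ∑ b : F, #(cubicRoots b c) = Fintype.card F - 1 := by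
    rw [← card_univ, ← card_erase_of_mem (mem_univ 0),
      card_eq_sum_card_filter_mem_cubicRoots (univ.erase 0) id c (by simp)]
    refine sum_congr rfl fun b _ ↦ congrArg card ?_
    ext x
    simpa using ne_zero_of_mem_cubicRoots hc
  rw [card_cubicCurve hc, card_filter, mul_sum, ← sum_add_distrib, ← hunits, mul_sum]
  exact sum_congr rfl fun b _ ↦ card_offDiag_cubicRoots_add h3 hc b

lemma card_cubicCurve_eq_sum (hc : c ≠ 0) :
    #(cubicCurve c) = ∑ u : F, #{z : F | z ^ 3 * (u * (1 - u)) = c} := by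
  rw [← card_sigma]
  refine card_bij' (fun q _ ↦ ⟨-q.2 / q.1, -q.1⟩) (fun s _ ↦ (-s.2, s.1 * s.2)) ?_ ?_ ?_ ?_
  · intro q hq
    have hq0 := fst_ne_zero_of_mem_cubicCurve hc hq
    rw [mem_cubicCurve] at hq
    simp only [mem_sigma, mem_univ, mem_filter, true_and, ← hq]
    field_simp
    ring
  · intro s hs
    simp only [mem_sigma, mem_univ, mem_filter, true_and] at hs
    rw [mem_cubicCurve, ← hs]
    ring
  · intro q hq
    have hq0 := fst_ne_zero_of_mem_cubicCurve hc hq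
    ext <;> simp [hq0]
  · intro s hs
    have hs0 : s.2 ≠ 0 := by
      intro h
      simp_all
    ext <;> simp [hs0]

lemma card_cubicCurve_mul_pow_three (c : F) {e : F} (he : e ≠ 0) :
    #(cubicCurve (c * e ^ 3)) = #(cubicCurve c) := by
  refine (card_equiv ((Equiv.mulLeft₀ e he).prodCongr (Equiv.mulLeft₀ e he)) fun q ↦ ?_).symm
  have he3 : e ^ 3 ≠ 0 := pow_ne_zero 3 he
  rw [mem_cubicCurve, mem_cubicCurve, ← mul_left_inj' he3]
  simp only [Equiv.prodCongr_apply, Prod.map, Equiv.mulLeft₀_apply]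
  ring_nf

lemma card_cubicCurve_eq_jacobiSum {R : Type*} [CommRing R] [IsDomain R] {χ : MulChar F R}
    (hχ : orderOf χ = 3) (hc : c ≠ 0) :
    (#(cubicCurve c) : R) =
      Fintype.card F - 2 + χ c * jacobiSum χ⁻¹ χ⁻¹ + χ⁻¹ c * jacobiSum χ χ := by
  rw [card_cubicCurve_eq_sum hc, Nat.cast_sum]
  simp_rw [card_filter_pow_three_mul_eq hχ hc]
  rw [sum_add_distrib, sum_add_distrib, ← mul_sum, ← mul_sum, ← jacobiSum_one_one (F := F)]
  simp only [jacobiSum, map_mul]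

end CubicCurve

lemma add_sq_add_mul_add_sq_of_sq_add_self_add_one_eq_zero {R : Type*} [CommRing R] {w : R}
    (hw : w ^ 2 + w + 1 = 0) (y z : R) :
    (y + z) ^ 2 + (y + z) * (w * y + w ^ 2 * z) + (w * y + w ^ 2 * z) ^ 2 = 3 * (y * z) := by
  linear_combination (y ^ 2 + z ^ 2 * (w ^ 2 - w + 1) + y * z * (2 * w - 1)) * hw

section FrobeniusTrace

variable {F : Type*} [Field F] [Fintype F]

lemma three_ne_zero_of_dvd_card_sub_one (hq : 3 ∣ Fintype.card F - 1) : (3 : F) ≠ 0 := by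
  intro h
  obtain ⟨k, hk⟩ := hq
  have hcard : Fintype.card F = 3 * k + 1 := by have := Fintype.card_pos (α := F); omega
  have hzero := FiniteField.cast_card_eq_zero F
  simp [hcard, h] at hzero

lemma odd_card_of_two_ne_zero (h2 : (2 : F) ≠ 0) : Odd (Fintype.card F) := by
  refine Nat.odd_iff.mpr (FiniteField.odd_card_of_char_ne_two fun h ↦ h2 ?_)
  have := ringChar.of_eq h
  exact CharP.cast_eq_zero F 2

lemma jacobiSum_inv_mul_jacobiSum_of_orderOf_eq_three {χ : MulChar F ℂ} (hχ : orderOf χ = 3) :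
    jacobiSum χ⁻¹ χ⁻¹ * jacobiSum χ χ = Fintype.card F := by
  have hchar : ringChar ℂ ≠ ringChar F := by
    rw [ringChar.eq_zero]
    exact (CharP.ringChar_ne_zero_of_finite F).symm
  have hne : χ ≠ 1 := by
    rintro rfl
    simp at hχ
  have hsq : χ * χ ≠ 1 := by
    rw [← pow_two, ← inv_eq_sq_of_orderOf_eq_three hχ]
    exact inv_ne_one.mpr hne
  rw [mul_comm, jacobiSum_mul_jacobiSum_inv hchar hne hne hsq]

variable [DecidableEq F] {c : F}

/-- The trace of Frobenius `q + 1 - N` of the projective curve `x y (x + y) = c z ^ 3` over a field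
with `q` elements, where `N` is its number of points: those of `cubicCurve c` and three at
infinity. -/
def frobeniusTrace (c : F) : ℤ := Fintype.card F - 2 - #(cubicCurve c)

lemma three_mul_card_cubicRoots_nonempty (h3 : (3 : F) ≠ 0) (hc : c ≠ 0) :
    3 * (#{b : F | (cubicRoots b c).Nonempty} : ℤ) =
      2 * Fintype.card F - 1 + frobeniusTrace c := by
  have hcurve := card_cubicCurve_add_three_mul h3 hc
  have hcard := Fintype.one_lt_card (α := F)
  unfold frobeniusTrace
  omega

lemma frobeniusTrace_mul_pow_three (c : F) {e : F} (he : e ≠ 0) :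
    frobeniusTrace (c * e ^ 3) = frobeniusTrace c := by
  rw [frobeniusTrace, card_cubicCurve_mul_pow_three c he, frobeniusTrace]

lemma frobeniusTrace_eq_jacobiSum {R : Type*} [CommRing R] [IsDomain R] {χ : MulChar F R}
    (hχ : orderOf χ = 3) (hc : c ≠ 0) :
    (frobeniusTrace c : R) = -(χ c * jacobiSum χ⁻¹ χ⁻¹ + χ⁻¹ c * jacobiSum χ χ) := by
  rw [frobeniusTrace, Int.cast_sub, Int.cast_natCast, card_cubicCurve_eq_jacobiSum hχ hc]
  push_cast
  ring

lemma cast_frobeniusTrace_mul (hq : 3 ∣ Fintype.card F - 1) (hc : c ≠ 0) {a : F} (ha : a ≠ 0) :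
    (frobeniusTrace (c * a) : F) = a ^ ((Fintype.card F - 1) / 3) * frobeniusTrace c := by
  have hχ := orderOf_powerResidueChar hq
  have hJ := jacobiSum_powerResidueChar_self hq (by norm_num)
  rw [frobeniusTrace_eq_jacobiSum hχ hc, frobeniusTrace_eq_jacobiSum hχ (mul_ne_zero hc ha), hJ,
    map_mul, ← powerResidueChar_apply 3 ha]
  ring

lemma frobeniusTrace_sq_add_mul_add_sq (hq : 3 ∣ Fintype.card F - 1) (hc : c ≠ 0) {g : F}
    (hg : ¬∃ e, e ^ 3 = g) :
    frobeniusTrace c ^ 2 + frobeniusTrace c * frobeniusTrace (c * g) + frobeniusTrace (c * g) ^ 2 =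
      3 * Fintype.card F := by
  have hg0 : g ≠ 0 := by
    rintro rfl
    exact hg ⟨0, zero_pow three_ne_zero⟩
  obtain ⟨χ, hχ⟩ := MulChar.exists_mulChar_orderOf F hq
    (Complex.isPrimitiveRoot_exp 3 three_ne_zero)
  have hroot : χ g ^ 2 + χ g + 1 = 0 := by
    have hne : χ g ≠ 1 := by
      rwa [Ne, mulChar_apply_eq_one_iff_exists_pow_orderOf_eq χ hg0, hχ]
    rw [← sum_range_orderOf_mulChar_apply_pow_eq_zero χ hg0 hne, hχ]
    simp only [sum_range_succ, sum_range_zero]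
    ring
  have htrace := frobeniusTrace_eq_jacobiSum hχ hc
  have htrace_mul := frobeniusTrace_eq_jacobiSum hχ (mul_ne_zero hc hg0)
  rw [map_mul, map_mul, inv_eq_sq_of_orderOf_eq_three hχ, MulChar.pow_apply' χ two_ne_zero g,
    ← inv_eq_sq_of_orderOf_eq_three hχ] at htrace_mul
  have hprod : χ c * jacobiSum χ⁻¹ χ⁻¹ * (χ⁻¹ c * jacobiSum χ χ) = Fintype.card F := by
    rw [mul_mul_mul_comm, ← MulChar.mul_apply, mul_inv_cancel, MulChar.one_apply hc.isUnit,
      one_mul, jacobiSum_inv_mul_jacobiSum_of_orderOf_eq_three hχ]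
  have hnorm := add_sq_add_mul_add_sq_of_sq_add_self_add_one_eq_zero hroot
    (χ c * jacobiSum χ⁻¹ χ⁻¹) (χ⁻¹ c * jacobiSum χ χ)
  rw [hprod] at hnorm
  rw [← Int.cast_inj (α := ℂ)]
  push_cast
  rw [htrace, htrace_mul, ← hnorm]
  ring

lemma exists_frobeniusTrace_two_eq_two_mul (hq : 3 ∣ Fintype.card F - 1) (h2 : (2 : F) ≠ 0) :
    ∃ A : ℤ, frobeniusTrace (2 : F) = 2 * A ∧ A % 3 = 1 := by
  have hcubes : #{x : F | 2 * x ^ 3 = 2} = 3 := by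
    simpa [h2] using card_filter_pow_eq_pow hq (one_ne_zero (α := F))
  have hmod_two := card_cubicCurve_modEq_two h2
  rw [hcubes, Nat.ModEq] at hmod_two
  have hmod_three := card_cubicCurve_add_three_mul (three_ne_zero_of_dvd_card_sub_one hq) h2
  obtain ⟨k, hk⟩ := odd_card_of_two_ne_zero h2
  have hcard := Fintype.one_lt_card (α := F)
  refine ⟨frobeniusTrace (2 : F) / 2, ?_⟩
  unfold frobeniusTrace
  omega

lemma exists_frobeniusTrace_mul_eq (hq : 3 ∣ Fintype.card F - 1) (hc : c ≠ 0) {A : ℤ}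
    (hA : frobeniusTrace c = 2 * A) {g : F} (hg : ¬∃ e, e ^ 3 = g) :
    ∃ B : ℤ, frobeniusTrace (c * g) = -A - 3 * B ∧ (Fintype.card F : ℤ) = A ^ 2 + 3 * B ^ 2 := by
  have hnorm := frobeniusTrace_sq_add_mul_add_sq hq hc hg
  rw [hA] at hnorm
  have hdvd : (3 : ℤ) ∣ (frobeniusTrace (c * g) + A) ^ 2 :=
    ⟨Fintype.card F - A ^ 2, by linear_combination hnorm⟩
  obtain ⟨B, hB⟩ := Int.prime_three.dvd_of_dvd_pow hdvd
  have htrace : frobeniusTrace (c * g) = -A - 3 * -B := by linear_combination hB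
  refine ⟨-B, htrace, ?_⟩
  rw [htrace] at hnorm
  linarith

end FrobeniusTrace

section SumOfSquares

lemma eq_zero_of_sq_eq_sq_add_mul_sq_of_dvd {p d X Y : ℤ} (hd : 1 < d)
    (h : p ^ 2 = X ^ 2 + d * Y ^ 2) (hpY : p ∣ Y) : Y = 0 := by
  by_contra hY
  have hle : p ^ 2 ≤ Y ^ 2 := Int.le_of_dvd (by positivity) (pow_dvd_pow_of_dvd hpY 2)
  nlinarith [sq_nonneg X, sq_pos_of_ne_zero hY]

-- Brahmagupta's identity writes `p ^ 2` as `X ^ 2 + d Y ^ 2` with `Y = A D - C B` and with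
-- `Y = A D + C B`, and `p` divides the product of these two numbers.
lemma sq_eq_sq_and_sq_eq_sq_of_prime_eq_sq_add_mul_sq {p d A B C D : ℤ} (hp : Prime p)
    (hd : 1 < d) (hAB : p = A ^ 2 + d * B ^ 2) (hCD : p = C ^ 2 + d * D ^ 2) :
    A ^ 2 = C ^ 2 ∧ B ^ 2 = D ^ 2 := by
  have hprod : (A * D - C * B) * (A * D + C * B) = p * (D ^ 2 - B ^ 2) := by
    linear_combination -D ^ 2 * hAB + B ^ 2 * hCD
  have hminus : p ^ 2 = (A * C + d * B * D) ^ 2 + d * (A * D - C * B) ^ 2 := by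
    linear_combination p * hAB + (A ^ 2 + d * B ^ 2) * hCD
  have hplus : p ^ 2 = (A * C - d * B * D) ^ 2 + d * (A * D + C * B) ^ 2 := by
    linear_combination p * hAB + (A ^ 2 + d * B ^ 2) * hCD
  have hzero : (A * D - C * B) * (A * D + C * B) = 0 :=
    mul_eq_zero.mpr <| (hp.dvd_or_dvd ⟨_, hprod⟩).imp
      (eq_zero_of_sq_eq_sq_add_mul_sq_of_dvd hd hminus)
      (eq_zero_of_sq_eq_sq_add_mul_sq_of_dvd hd hplus)
  have hBD : D ^ 2 - B ^ 2 = 0 := (mul_eq_zero.mp (hprod ▸ hzero)).resolve_left hp.ne_zero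
  exact ⟨by linear_combination hCD - hAB + d * hBD, by linear_combination -hBD⟩

end SumOfSquares

section PrimeField

variable {p : ℕ} {A B : ℤ}

lemma cast_sq_eq_neg_mul_cast_sq {d : ℤ} (hAB : (p : ℤ) = A ^ 2 + d * B ^ 2) :
    (A : ZMod p) ^ 2 = -d * (B : ZMod p) ^ 2 := by
  have h := congrArg (Int.cast (R := ZMod p)) hAB
  push_cast at h
  rw [CharP.cast_eq_zero] at h
  linear_combination -h

variable [Fact p.Prime]

lemma zmod_two_ne_zero_of_three_dvd_sub_one (hp : 3 ∣ p - 1) : (2 : ZMod p) ≠ 0 := by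
  refine Ring.two_ne_zero ?_
  rw [ZMod.ringChar_zmod_n]
  rintro rfl
  omega

lemma frobeniusTrace_two_eq (hp : 3 ∣ p - 1) (hAB : (p : ℤ) = A ^ 2 + 3 * B ^ 2)
    (hA : A % 3 = 1) : frobeniusTrace (2 : ZMod p) = 2 * A := by
  have hq : 3 ∣ Fintype.card (ZMod p) - 1 := by rwa [ZMod.card]
  have h2 := zmod_two_ne_zero_of_three_dvd_sub_one hp
  obtain ⟨A', htrace, hA'⟩ := exists_frobeniusTrace_two_eq_two_mul hq h2
  obtain ⟨g, hg⟩ := exists_not_exists_pow_eq hq (by norm_num)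
  obtain ⟨B', -, hAB'⟩ := exists_frobeniusTrace_mul_eq hq h2 htrace hg
  rw [ZMod.card] at hAB'
  obtain ⟨hsq, -⟩ := sq_eq_sq_and_sq_eq_sq_of_prime_eq_sq_add_mul_sq
    (Nat.prime_iff_prime_int.mp Fact.out) (by norm_num) hAB hAB'
  rcases sq_eq_sq_iff_eq_or_eq_neg.mp hsq with rfl | h
  · exact htrace
  · omega

lemma cast_ne_zero_of_eq_sq_add_mul_sq {d : ℤ} (hAB : (p : ℤ) = A ^ 2 + d * B ^ 2) :
    (B : ZMod p) ≠ 0 := by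
  have hp : Prime (p : ℤ) := Nat.prime_iff_prime_int.mp Fact.out
  rw [Ne, ZMod.intCast_zmod_eq_zero_iff_dvd]
  intro hB
  have hA : (p : ℤ) ∣ A := hp.dvd_of_dvd_pow (n := 2) <|
    (dvd_add_left ((dvd_pow hB two_ne_zero).mul_left d)).mp hAB.dvd
  have hdvd : (p : ℤ) ^ 2 ∣ A ^ 2 + d * B ^ 2 :=
    dvd_add (pow_dvd_pow_of_dvd hA 2) ((pow_dvd_pow_of_dvd hB 2).mul_left d)
  rw [← hAB, pow_two] at hdvd
  exact hp.not_isUnit (hp.irreducible.squarefree _ hdvd)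

lemma frobeniusTrace_two_mul_eq_of_pow_eq_one (hp : 3 ∣ p - 1)
    (hAB : (p : ℤ) = A ^ 2 + 3 * B ^ 2) (hA : A % 3 = 1) {a : ZMod p} (ha : a ≠ 0)
    (hpow : a ^ ((p - 1) / 3) = 1) : frobeniusTrace (2 * a) = 2 * A := by
  have hq : 3 ∣ Fintype.card (ZMod p) - 1 := by rwa [ZMod.card]
  obtain ⟨e, rfl⟩ := (pow_card_sub_one_div_eq_one_iff hq ha).mp (by rwa [ZMod.card])
  rw [frobeniusTrace_mul_pow_three 2 (ne_zero_pow three_ne_zero ha),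
    frobeniusTrace_two_eq hp hAB hA]

lemma frobeniusTrace_two_mul_eq_of_pow_eq (hp : 3 ∣ p - 1) (hAB : (p : ℤ) = A ^ 2 + 3 * B ^ 2)
    (hA : A % 3 = 1) {a : ZMod p} (ha : a ≠ 0)
    (hpow : a ^ ((p - 1) / 3) = (-1 - (A : ZMod p) * (B : ZMod p)⁻¹) / 2) :
    frobeniusTrace (2 * a) = -A + 3 * B := by
  have hq : 3 ∣ Fintype.card (ZMod p) - 1 := by rwa [ZMod.card]
  have h2 := zmod_two_ne_zero_of_three_dvd_sub_one hp
  have h3 := three_ne_zero_of_dvd_card_sub_one hq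
  have hB := cast_ne_zero_of_eq_sq_add_mul_sq hAB
  have hsq := cast_sq_eq_neg_mul_cast_sq hAB
  push_cast at hsq
  have htwo := frobeniusTrace_two_eq hp hAB hA
  have hmod : (frobeniusTrace (2 * a) : ZMod p) = -A + 3 * B := by
    rw [cast_frobeniusTrace_mul hq h2 ha, ZMod.card, hpow, htwo]
    push_cast
    field_simp
    linear_combination -hsq
  have hcube : ¬∃ e, e ^ 3 = a := by
    rw [← pow_card_sub_one_div_eq_one_iff hq ha, ZMod.card, hpow]
    intro h
    field_simp at h
    have hB12 : 2 * (2 * (3 * (B : ZMod p) ^ 2)) = 0 := by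
      linear_combination hsq + (A - 3 * B) * h
    exact mul_ne_zero h2 (mul_ne_zero h2 (mul_ne_zero h3 (pow_ne_zero 2 hB))) hB12
  obtain ⟨B', htrace, hAB'⟩ := exists_frobeniusTrace_mul_eq hq h2 htwo hcube
  rw [ZMod.card] at hAB'
  obtain ⟨-, hBB'⟩ := sq_eq_sq_and_sq_eq_sq_of_prime_eq_sq_add_mul_sq
    (Nat.prime_iff_prime_int.mp Fact.out) (by norm_num) hAB' hAB
  rcases sq_eq_sq_iff_eq_or_eq_neg.mp hBB' with rfl | rfl
  · rw [htrace] at hmod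
    push_cast at hmod
    exact absurd (by linear_combination -hmod) (mul_ne_zero h2 (mul_ne_zero h3 hB))
  · rw [htrace]
    ring

lemma card_filter_range_exists_pow_three_add_modEq {c : ℤ} (hc : (c : ZMod p) ≠ 0) :
    #{b ∈ range p | ∃ x ∈ Icc 1 (p - 1), (x : ℤ) ^ 3 + c ≡ (b : ℕ) * x [ZMOD p]} =
      #{b : ZMod p | (cubicRoots b (c : ZMod p)).Nonempty} := by
  have hcongr (b x : ℕ) : (x : ℤ) ^ 3 + c ≡ (b : ℤ) * (x : ℤ) [ZMOD (p : ℤ)] ↔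
      (x : ZMod p) ∈ cubicRoots (b : ZMod p) (c : ZMod p) := by
    rw [← ZMod.intCast_eq_intCast_iff, mem_cubicRoots]
    push_cast
    rfl
  simp only [hcongr]
  refine card_bij' (fun b _ ↦ (b : ZMod p)) (fun b _ ↦ b.val) ?_ ?_ ?_ ?_
  · intro b hb
    obtain ⟨-, x, -, hx⟩ := mem_filter.mp hb
    exact mem_filter.mpr ⟨mem_univ _, x, hx⟩
  · intro b hb
    obtain ⟨-, x, hx⟩ := mem_filter.mp hb
    have hpos : 0 < x.val := ZMod.val_pos.mpr (ne_zero_of_mem_cubicRoots hc hx)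
    have hlt := ZMod.val_lt x
    refine mem_filter.mpr ⟨mem_range.mpr (ZMod.val_lt b), x.val, mem_Icc.mpr ⟨hpos, by omega⟩, ?_⟩
    rwa [ZMod.natCast_zmod_val, ZMod.natCast_zmod_val]
  · intro b hb
    exact ZMod.val_cast_of_lt (mem_range.mp (mem_filter.mp hb).1)
  · intro b _
    exact ZMod.natCast_zmod_val b

end PrimeField

theorem stmt_2 (p : ℕ) [hp : Fact p.Prime] (hp1 : p % 3 = 1)
    (A B : ℤ) (hpAB : (p : ℤ) = A ^ 2 + 3 * B ^ 2) (hA : A % 3 = 1)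
    (a : ℤ) (ha : ¬ (p : ℤ) ∣ a) :
    (((a : ZMod p)) ^ ((p - 1) / 3) = 1 →
      3 * (((Finset.range p).filter (fun b : ℕ =>
      ∃ x ∈ Finset.Icc 1 (p - 1),
        (x : ℤ) ^ 3 + (2 * a) ≡ (b : ℤ) * (x : ℤ) [ZMOD (p : ℤ)])).card : ℤ) = 2 * (p : ℤ) - 1 + 2 * A) ∧
    (((a : ZMod p)) ^ ((p - 1) / 3) = (-1 - (A : ZMod p) * (B : ZMod p)⁻¹) / 2 →
      3 * (((Finset.range p).filter (fun b : ℕ =>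
      ∃ x ∈ Finset.Icc 1 (p - 1),
        (x : ℤ) ^ 3 + (2 * a) ≡ (b : ℤ) * (x : ℤ) [ZMOD (p : ℤ)])).card : ℤ) = 2 * (p : ℤ) - 1 - A + 3 * B) ∧
    (((a : ZMod p)) ^ ((p - 1) / 3) = (-1 + (A : ZMod p) * (B : ZMod p)⁻¹) / 2 →
      3 * (((Finset.range p).filter (fun b : ℕ =>
      ∃ x ∈ Finset.Icc 1 (p - 1),
        (x : ℤ) ^ 3 + (2 * a) ≡ (b : ℤ) * (x : ℤ) [ZMOD (p : ℤ)])).card : ℤ) = 2 * (p : ℤ) - 1 - A - 3 * B) := by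
  have hp3 : 3 ∣ p - 1 := by omega
  have ha0 : (a : ZMod p) ≠ 0 := by rwa [Ne, ZMod.intCast_zmod_eq_zero_iff_dvd]
  have h2a := mul_ne_zero (zmod_two_ne_zero_of_three_dvd_sub_one hp3) ha0
  have hcast : ((2 * a : ℤ) : ZMod p) = 2 * (a : ZMod p) := by simp
  have hcount := three_mul_card_cubicRoots_nonempty
    (three_ne_zero_of_dvd_card_sub_one (by rwa [ZMod.card])) h2a
  rw [ZMod.card] at hcount
  rw [card_filter_range_exists_pow_three_add_modEq (hcast ▸ h2a), hcast, hcount]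
  refine ⟨fun hpow ↦ ?_, fun hpow ↦ ?_, fun hpow ↦ ?_⟩
  · rw [frobeniusTrace_two_mul_eq_of_pow_eq_one hp3 hpAB hA ha0 hpow]
  · rw [frobeniusTrace_two_mul_eq_of_pow_eq hp3 hpAB hA ha0 hpow]
    ring
  · have hpow' : (a : ZMod p) ^ ((p - 1) / 3) = (-1 - A * ((-B : ℤ) : ZMod p)⁻¹) / 2 := by
      rw [hpow]
      push_cast
      rw [inv_neg]
      ring
    rw [frobeniusTrace_two_mul_eq_of_pow_eq hp3 (by rwa [neg_sq]) hA ha0 hpow']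
    ring
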